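/- Let B be a supersoluble brace and let I be an ideal of B that is centrally nilpotent (as a brace). Then I is B-centrally nilpotent, that is, there is a finite chain {0} = I_0 ≤ I_1 ≤ … ≤ I_n = I of ideals of B such that I_{j+1}/I_j ⊆ ζ(I/I_j) for all 0 ≤ j < n. -/

import Mathlib

/-- A (skew left) brace: a set with an additive group structure (not necessarily abelian)
and a multiplicative group structure sharing the same identity, satisfying the skew
distributive law `a * (b + c) = a * b + -a + a * c`. -/
class SkewBrace (B : Type*) extends AddGroup B, Group B where
  one_eq_zero : (1 : B) = (0 : B)
  skew_distrib : ∀ a b c : B, a * (b + c) = a * b + -a + a * c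

/-- A group is supersoluble if it has a finite chain of normal subgroups with all
factors cyclic. -/
def Group.IsSupersoluble (G : Type*) [Group G] : Prop :=
  ∃ (n : ℕ) (H : ℕ → Subgroup G),
    H 0 = ⊥ ∧ H n = ⊤ ∧ (∀ i, (H i).Normal) ∧ (∀ i, i < n → H i ≤ H (i + 1)) ∧
    ∀ i, i < n → ∃ x ∈ H (i + 1), ∀ y ∈ H (i + 1), ∃ k : ℤ, (x ^ k)⁻¹ * y ∈ H i

namespace SkewBrace

variable {B : Type*} [SkewBrace B]

/-- `lam a b = -a + a * b`, i.e. `λ_a(b)`. -/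
def lam (a b : B) : B := -a + a * b

/-- the star operation `a ∗ b = λ_a(b) - b`. -/
def starOp (a b : B) : B := lam a b + -b

/-- the additive commutator `[a,b]_+`. -/
def addCommutator (a b : B) : B := -a + -b + a + b

/-- A subbrace of `B`: a subset that is a subgroup of both `(B,+)` and `(B,·)`. -/
structure Subbrace (B : Type*) [SkewBrace B] where
  carrier : Set B
  zero_mem : (0 : B) ∈ carrier
  add_mem : ∀ {a b : B}, a ∈ carrier → b ∈ carrier → a + b ∈ carrier
  neg_mem : ∀ {a : B}, a ∈ carrier → -a ∈ carrier
  mul_mem : ∀ {a b : B}, a ∈ carrier → b ∈ carrier → a * b ∈ carrier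
  inv_mem : ∀ {a : B}, a ∈ carrier → a⁻¹ ∈ carrier

/-- An ideal of `B`: a subbrace that is normal in `(B,+)` and in `(B,·)` and is
invariant under all the maps `λ_b`. -/
structure BraceIdeal (B : Type*) [SkewBrace B] extends Subbrace B where
  addConj_mem : ∀ (b : B) {a : B}, a ∈ carrier → b + a + -b ∈ carrier
  mulConj_mem : ∀ (b : B) {a : B}, a ∈ carrier → b * a * b⁻¹ ∈ carrier
  lam_mem : ∀ (b : B) {a : B}, a ∈ carrier → lam b a ∈ carrier

/-- The additive subgroup underlying a subbrace. -/
def Subbrace.addSubgroup (S : Subbrace B) : AddSubgroup B where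
  carrier := S.carrier
  zero_mem' := S.zero_mem
  add_mem' := S.add_mem
  neg_mem' := S.neg_mem

/-- The multiplicative subgroup underlying a subbrace. -/
def Subbrace.subgroup (S : Subbrace B) : Subgroup B where
  carrier := S.carrier
  one_mem' := by rw [one_eq_zero]; exact S.zero_mem
  mul_mem' := S.mul_mem
  inv_mem' := S.inv_mem

/-- Given ideals `J ≤ I` of `B`, `MemSocQuotRel I J x` says that the coset of `x`
lies in `Soc(I/J) = Ker(λ) ∩ Z(I/J, +)` (for `I = B` take `I = Set.univ`). -/
def MemSocQuotRel (I J : Set B) (x : B) : Prop :=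
  x ∈ I ∧ (∀ y ∈ I, -y + lam x y ∈ J) ∧ ∀ y ∈ I, -(y + x) + (x + y) ∈ J

/-- Given ideals `J ≤ I` of `B`, `MemZetaQuotRel I J x` says that the coset of `x`
lies in `ζ(I/J) = Soc(I/J) ∩ Z(I/J, ·)`. -/
def MemZetaQuotRel (I J : Set B) (x : B) : Prop :=
  MemSocQuotRel I J x ∧ ∀ y ∈ I, (y * x)⁻¹ * (x * y) ∈ J

/-- The coset of `x` lies in `Soc(B/J)`. -/
def MemSocQuot (J : Set B) (x : B) : Prop := MemSocQuotRel Set.univ J x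

/-- The coset of `x` lies in `ζ(B/J)`. -/
def MemZetaQuot (J : Set B) (x : B) : Prop := MemZetaQuotRel Set.univ J x

/-- For ideals `I ≤ J`, the additive group of the quotient `J/I` is infinite cyclic. -/
def QuotAddInfCyclic (I J : Set B) : Prop :=
  ∃ x ∈ J, (∀ y ∈ J, ∃ n : ℤ, -(n • x) + y ∈ I) ∧ ∀ n : ℤ, n • x ∈ I → n = 0

/-- For ideals `I ≤ J`, the quotient `J/I` has prime order `p`. -/
def QuotPrimeOrder (I J : Set B) (p : ℕ) : Prop :=
  p.Prime ∧ ∃ x ∈ J, x ∉ I ∧ p • x ∈ I ∧ ∀ y ∈ J, ∃ n : ℤ, -(n • x) + y ∈ I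

/-- A brace is supersoluble if it has a finite chain of ideals each factor of which
either is additively infinite cyclic and contained in the socle of the corresponding
quotient, or has prime order. -/
def IsSupersoluble (B : Type*) [SkewBrace B] : Prop :=
  ∃ (n : ℕ) (I : ℕ → BraceIdeal B),
    (I 0).carrier = {0} ∧ (I n).carrier = Set.univ ∧
    (∀ i, i < n → (I i).carrier ⊆ (I (i + 1)).carrier) ∧
    ∀ i, i < n →
      (QuotAddInfCyclic (I i).carrier (I (i + 1)).carrier ∧
        ∀ x ∈ (I (i + 1)).carrier, MemSocQuot (I i).carrier x) ∨
      ∃ p : ℕ, QuotPrimeOrder (I i).carrier (I (i + 1)).carrier p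

/-- The upper socle series of the brace (carrier of the ideal) `I`. -/
def socChainRel (I : Set B) : ℕ → Set B
  | 0 => {0}
  | n + 1 => {x | MemSocQuotRel I (socChainRel I n) x}

/-- The upper central series of the brace (carrier of the ideal) `I`. -/
def zetaChainRel (I : Set B) : ℕ → Set B
  | 0 => {0}
  | n + 1 => {x | MemZetaQuotRel I (zetaChainRel I n) x}

/-- The upper socle series `Soc_n(B)` of `B`. -/
def socChain (B : Type*) [SkewBrace B] : ℕ → Set B := socChainRel Set.univ

/-- The upper central series `ζ_n(B)` of `B`. -/
def zetaChain (B : Type*) [SkewBrace B] : ℕ → Set B := zetaChainRel Set.univ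

/-- A brace is centrally nilpotent if its upper central series reaches `B`. -/
def IsCentrallyNilpotent (B : Type*) [SkewBrace B] : Prop :=
  ∃ m : ℕ, zetaChain B m = Set.univ

end SkewBrace

namespace SkewBrace

section helpers

variable {B : Type*} [SkewBrace B]

theorem mul_eq_add_lam (a b : B) : a * b = a + lam a b := by
  simp [lam]

theorem lam_add (a b c : B) : lam a (b + c) = lam a b + lam a c := by
  simp only [lam, skew_distrib, add_assoc]

theorem lam_zero (a : B) : lam a 0 = 0 := by
  have h := lam_add a 0 0
  simpa using h

theorem lam_neg (a b : B) : lam a (-b) = -lam a b := by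
  have h := lam_add a (-b) b
  rw [neg_add_cancel, lam_zero] at h
  exact eq_neg_of_add_eq_zero_left h.symm

theorem lam_mul (a b c : B) : lam (a * b) c = lam a (lam b c) := by
  have h1 : lam a (lam b c) = -lam a b + lam a (b * c) := by
    rw [← lam_neg, ← lam_add]; rfl
  rw [h1]
  simp only [lam, neg_add_rev, neg_neg, mul_assoc, add_assoc, add_neg_cancel_left]

theorem lam_one (c : B) : lam 1 c = c := by
  simp [lam, one_eq_zero (B := B)]

theorem lam_inv_lam (a c : B) : lam a⁻¹ (lam a c) = c := by
  rw [← lam_mul, inv_mul_cancel, lam_one]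

theorem lam_lam_inv (a c : B) : lam a (lam a⁻¹ c) = c := by
  rw [← lam_mul, mul_inv_cancel, lam_one]

/-- `lam a` as an additive endomorphism. -/
def lamHom (a : B) : B →+ B where
  toFun := lam a
  map_zero' := lam_zero a
  map_add' := lam_add a

theorem lam_zsmul (a c : B) (n : ℤ) : lam a (n • c) = n • lam a c :=
  map_zsmul (lamHom a) n c

instance normal_add (J : BraceIdeal B) : J.addSubgroup.Normal where
  conj_mem n hn g := J.addConj_mem g hn

/-- Additive projection modulo an ideal. -/
def qm (J : BraceIdeal B) : B →+ B ⧸ J.addSubgroup := QuotientAddGroup.mk' J.addSubgroup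

theorem qm_eq (J : BraceIdeal B) (a b : B) : qm J a = qm J b ↔ -a + b ∈ J.carrier :=
  QuotientAddGroup.eq

theorem qm_zero (J : BraceIdeal B) (a : B) : qm J a = 0 ↔ a ∈ J.carrier :=
  QuotientAddGroup.eq_zero_iff a

theorem qm_lam {J : BraceIdeal B} (y : B) {a b : B} (h : qm J a = qm J b) :
    qm J (lam y a) = qm J (lam y b) := by
  rw [qm_eq] at *
  rw [← lam_neg, ← lam_add]
  exact J.lam_mem y h

theorem qm_lam_left_mem {J : BraceIdeal B} {j : B} (hj : j ∈ J.carrier) (y : B) :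
    qm J (lam j y) = qm J y := by
  have h1 : j * y = y + lam y (y⁻¹ * j * y) := by
    rw [← mul_eq_add_lam]; group
  have h2 : y⁻¹ * j * y ∈ J.carrier := by
    simpa using J.mulConj_mem y⁻¹ hj
  have h3 := (qm_zero J _).2 (J.lam_mem y h2)
  have h4 := (qm_zero J _).2 hj
  rw [lam, h1, map_add, map_add, map_neg, h3, h4]
  simp

theorem qm_lam_left {J : BraceIdeal B} {a b : B} (h : qm J a = qm J b) (y : B) :
    qm J (lam a y) = qm J (lam b y) := by
  rw [qm_eq] at h
  have h1 : b = a * lam a⁻¹ (-a + b) := by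
    rw [mul_eq_add_lam, lam_lam_inv, add_neg_cancel_left]
  rw [h1, lam_mul]
  exact (qm_lam a (qm_lam_left_mem (J.lam_mem _ h) y)).symm

theorem inv_mul_mem_iff (J : BraceIdeal B) (a b : B) :
    a⁻¹ * b ∈ J.carrier ↔ -a + b ∈ J.carrier := by
  have h : lam a (a⁻¹ * b) = -a + b := by simp [lam]
  constructor
  · intro h1; rw [← h]; exact J.lam_mem a h1
  · intro h1
    rw [← lam_inv_lam a (a⁻¹ * b), h]
    exact J.lam_mem _ h1

/-- Centrality modulo `J`, reformulated in the additive quotient. -/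
def Cen (I J : BraceIdeal B) (x : B) : Prop :=
  x ∈ I.carrier ∧ ∀ y ∈ I.carrier, qm J (lam x y) = qm J y ∧
    qm J x + qm J y = qm J y + qm J x ∧ qm J (lam y x) = qm J x

theorem mul_comm_iff (J : BraceIdeal B) (x y : B) (h1 : qm J (lam x y) = qm J y)
    (h2 : qm J x + qm J y = qm J y + qm J x) :
    (y * x)⁻¹ * (x * y) ∈ J.carrier ↔ qm J (lam y x) = qm J x := by
  rw [inv_mul_mem_iff, ← qm_eq, mul_eq_add_lam, mul_eq_add_lam, map_add, map_add, h1, h2,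
    add_right_inj]

theorem cen_iff (I J : BraceIdeal B) (x : B) :
    Cen I J x ↔ MemZetaQuotRel I.carrier J.carrier x := by
  have e1 : ∀ y, (-y + lam x y ∈ J.carrier ↔ qm J (lam x y) = qm J y) := fun y => by
    rw [← qm_eq, eq_comm]
  have e2 : ∀ y, (-(y + x) + (x + y) ∈ J.carrier ↔
      qm J x + qm J y = qm J y + qm J x) := fun y => by
    rw [← qm_eq, map_add, map_add, eq_comm]
  constructor
  · rintro ⟨hx, h⟩
    refine ⟨⟨hx, fun y hy => (e1 y).2 (h y hy).1, fun y hy => (e2 y).2 (h y hy).2.1⟩,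
      fun y hy => ?_⟩
    exact (mul_comm_iff J x y (h y hy).1 (h y hy).2.1).2 (h y hy).2.2
  · rintro ⟨⟨hx, h1, h2⟩, h3⟩
    refine ⟨hx, fun y hy => ?_⟩
    have a1 := (e1 y).1 (h1 y hy)
    have a2 := (e2 y).1 (h2 y hy)
    exact ⟨a1, a2, (mul_comm_iff J x y a1 a2).1 (h3 y hy)⟩

theorem Cen.add {I J : BraceIdeal B} {x x' : B} (h : Cen I J x) (h' : Cen I J x') :
    Cen I J (x + x') := by
  refine ⟨I.add_mem h.1 h'.1, fun y hy => ⟨?_, ?_, ?_⟩⟩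
  · have e : x + x' = x * lam x⁻¹ x' := by rw [mul_eq_add_lam, lam_lam_inv]
    rw [e, lam_mul, ← (h.2 y hy).1]
    apply qm_lam
    rw [← (h'.2 y hy).1]
    exact qm_lam_left (h'.2 _ (I.inv_mem h.1)).2.2 y
  · rw [map_add, add_assoc, (h'.2 y hy).2.1, ← add_assoc, (h.2 y hy).2.1, add_assoc]
  · rw [lam_add, map_add, map_add, (h.2 y hy).2.2, (h'.2 y hy).2.2]

theorem Cen.neg {I J : BraceIdeal B} {x : B} (h : Cen I J x) : Cen I J (-x) := by
  refine ⟨I.neg_mem h.1, fun y hy => ⟨?_, ?_, ?_⟩⟩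
  · have e : lam x⁻¹ x = -x⁻¹ := by
      rw [lam, inv_mul_cancel, one_eq_zero, add_zero]
    have e1 := (h.2 _ (I.inv_mem h.1)).2.2
    rw [e, map_neg] at e1
    have e2 : qm J (-x) = qm J x⁻¹ := by rw [map_neg, ← e1, neg_neg]
    rw [qm_lam_left e2 y, ← qm_lam x⁻¹ (h.2 y hy).1, lam_inv_lam]
  · rw [map_neg]
    have : AddCommute (qm J x) (qm J y) := (h.2 y hy).2.1
    exact this.neg_left
  · rw [lam_neg, map_neg, map_neg, (h.2 y hy).2.2]

theorem Cen.of_mem {I J : BraceIdeal B} {x : B} (hJ : J.carrier ⊆ I.carrier)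
    (h : x ∈ J.carrier) : Cen I J x := by
  refine ⟨hJ h, fun y _ => ⟨qm_lam_left_mem h y, ?_, ?_⟩⟩
  · rw [(qm_zero J x).2 h]; simp
  · rw [(qm_zero J x).2 h, (qm_zero J _).2 (J.lam_mem y h)]

/-- Additive subgroup of elements central modulo `J`. -/
def cenSub (I J : BraceIdeal B) (hJ : J.carrier ⊆ I.carrier) : AddSubgroup B where
  carrier := {x | Cen I J x}
  zero_mem' := Cen.of_mem hJ J.zero_mem
  add_mem' := Cen.add
  neg_mem' := Cen.neg

/-- Intersection of ideals. -/
def inter (I J : BraceIdeal B) : BraceIdeal B where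
  carrier := I.carrier ∩ J.carrier
  zero_mem := ⟨I.zero_mem, J.zero_mem⟩
  add_mem h h' := ⟨I.add_mem h.1 h'.1, J.add_mem h.2 h'.2⟩
  neg_mem h := ⟨I.neg_mem h.1, J.neg_mem h.2⟩
  mul_mem h h' := ⟨I.mul_mem h.1 h'.1, J.mul_mem h.2 h'.2⟩
  inv_mem h := ⟨I.inv_mem h.1, J.inv_mem h.2⟩
  addConj_mem b _ h := ⟨I.addConj_mem b h.1, J.addConj_mem b h.2⟩
  mulConj_mem b _ h := ⟨I.mulConj_mem b h.1, J.mulConj_mem b h.2⟩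
  lam_mem b _ h := ⟨I.lam_mem b h.1, J.lam_mem b h.2⟩

theorem qm_inter (L I : BraceIdeal B) (a b : B) :
    qm (inter L I) a = qm (inter L I) b ↔ qm L a = qm L b ∧ qm I a = qm I b := by
  simp only [qm_eq]; rfl

/-- A central series forces a nontrivial central element in any ideal section. -/
theorem exists_cen (I J N : BraceIdeal B)
    (hcn : ∃ m : ℕ, zetaChainRel I.carrier m = I.carrier)
    (hN : N.carrier ⊆ I.carrier) {w : B} (hw : w ∈ N.carrier) (hwJ : w ∉ J.carrier) :
    ∃ z ∈ N.carrier, z ∉ J.carrier ∧ Cen I J z := by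
  classical
  obtain ⟨m, hm⟩ := hcn
  have hex : ∃ m : ℕ, ∃ z ∈ N.carrier, z ∉ J.carrier ∧ z ∈ zetaChainRel I.carrier m :=
    ⟨m, w, hw, hwJ, by rw [hm]; exact hN hw⟩
  obtain ⟨z, hzN, hzJ, hz⟩ := Nat.find_spec hex
  have hmin : ∀ k < Nat.find hex, ∀ c ∈ N.carrier, c ∈ zetaChainRel I.carrier k →
      c ∈ J.carrier := by
    intro k hk c hc hck
    by_contra hcJ
    exact Nat.find_min hex hk ⟨c, hc, hcJ, hck⟩
  refine ⟨z, hzN, hzJ, ?_⟩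
  generalize Nat.find hex = M at hz hmin
  cases M with
  | zero =>
    have : z = 0 := hz
    exact absurd (this ▸ J.zero_mem) hzJ
  | succ k =>
    obtain ⟨⟨hzI, h1⟩, h3⟩ := (hz : MemZetaQuotRel I.carrier (zetaChainRel I.carrier k) z)
    have hk := hmin k (Nat.lt_succ_self k)
    have c1 : ∀ y, -y + lam z y ∈ N.carrier := fun y =>
      (qm_eq N _ _).1 (qm_lam_left_mem hzN y).symm
    have c2 : ∀ y, -(y + z) + (z + y) ∈ N.carrier := fun y => by
      rw [← qm_eq, map_add, map_add, (qm_zero N z).2 hzN]; simp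
    have c3 : ∀ y, (y * z)⁻¹ * (z * y) ∈ N.carrier := fun y => by
      have := N.mul_mem (N.inv_mem hzN) (N.mulConj_mem y⁻¹ hzN)
      simpa [mul_assoc] using this
    rw [cen_iff]
    exact ⟨⟨hzI, fun y hy => hk _ (c1 y) (h1.1 y hy), fun y hy => hk _ (c2 y) (h1.2 y hy)⟩,
      fun y hy => hk _ (c3 y) (h3 y hy)⟩

theorem step (I L M : BraceIdeal B)
    (hcn : ∃ m : ℕ, zetaChainRel I.carrier m = I.carrier)
    (h : (QuotAddInfCyclic L.carrier M.carrier ∧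
        ∀ x ∈ M.carrier, MemSocQuot L.carrier x) ∨
      ∃ p : ℕ, QuotPrimeOrder L.carrier M.carrier p)
    {w : B} (hw : w ∈ (inter M I).carrier) : Cen I (inter L I) w := by
  have hJI : (inter L I).carrier ⊆ I.carrier := fun _ h => h.2
  by_cases hwJ : w ∈ (inter L I).carrier
  · exact Cen.of_mem hJI hwJ
  obtain ⟨z, hzN, hzJ, hz⟩ := exists_cen I (inter L I) (inter M I) hcn (fun _ h => h.2) hw hwJ
  have hzL : z ∉ L.carrier := fun h => hzJ ⟨h, hzN.2⟩
  rcases h with ⟨⟨x, hxM, hgen, htf⟩, hsoc⟩ | ⟨p, hp, x, hxM, hxL, hpx, hgen⟩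
  · refine ⟨hw.2, fun y hy => ?_⟩
    have qI : ∀ {a}, a ∈ I.carrier → qm I a = 0 := fun h => (qm_zero I _).2 h
    obtain ⟨-, s1, s2⟩ := hsoc w hw.1
    refine ⟨(qm_inter _ _ _ _).2 ⟨?_, ?_⟩, ?_, (qm_inter _ _ _ _).2 ⟨?_, ?_⟩⟩
    · exact ((qm_eq L _ _).2 (s1 y trivial)).symm
    · rw [qI hy, qI (I.lam_mem w hy)]
    · rw [← map_add, ← map_add]
      refine (qm_inter _ _ _ _).2 ⟨((qm_eq L _ _).2 (s2 y trivial)).symm, ?_⟩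
      rw [map_add, map_add, qI hy, qI hw.2]
    · obtain ⟨k, hk⟩ := hgen z hzN.1
      obtain ⟨c, hc⟩ := hgen w hw.1
      obtain ⟨a, ha⟩ := hgen _ (M.lam_mem y hxM)
      rw [← qm_eq] at hk hc ha
      have hk0 : k ≠ 0 := by
        rintro rfl
        apply hzL
        rw [← qm_zero, ← hk]; simp
      have e1 := ((qm_inter _ _ _ _).1 (hz.2 y hy).2.2).1
      have e2 := qm_lam y hk
      rw [lam_zsmul, e1, ← hk, map_zsmul, ← ha, ← map_zsmul, qm_eq, ← mul_zsmul', ← neg_zsmul,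
        ← add_zsmul] at e2
      have e3 := htf _ e2
      have ha1 : a = 1 := by
        have : k * (a - 1) = 0 := by linarith
        rcases mul_eq_zero.1 this with h | h
        · exact absurd h hk0
        · linarith
      rw [← qm_lam y hc, lam_zsmul, map_zsmul, ← ha, ha1, one_zsmul, ← map_zsmul, hc]
    · rw [qI hw.2, qI (I.lam_mem y hw.2)]
  · obtain ⟨k, hk⟩ := hgen z hzN.1
    obtain ⟨c, hc⟩ := hgen w hw.1
    rw [← qm_eq] at hk hc
    have hpx' : (p : ℤ) • qm L x = 0 := by
      rw [natCast_zsmul, ← map_nsmul]; exact (qm_zero L _).2 hpx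
    have hpk : ¬ (p : ℤ) ∣ k := by
      rintro ⟨t, rfl⟩
      apply hzL
      rw [← qm_zero, ← hk, map_zsmul, mul_comm, mul_zsmul, hpx', zsmul_zero]
    have hco : IsCoprime (p : ℤ) k :=
      (Prime.coprime_iff_not_dvd (Nat.prime_iff_prime_int.1 hp)).2 hpk
    obtain ⟨u, v, huv⟩ := hco
    have hx : qm L x = v • qm L z := by
      rw [← hk, map_zsmul, ← mul_zsmul]
      nth_rewrite 1 [← one_zsmul (qm L x), ← huv]
      rw [add_zsmul, mul_zsmul, hpx', zsmul_zero, zero_add]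
    have hwz : qm L ((c * v) • z) = qm L w := by
      rw [← hc, map_zsmul, map_zsmul, hx, mul_zsmul]
    rw [qm_eq] at hwz
    have hcz : (c * v) • z ∈ cenSub I (inter L I) hJI :=
      AddSubgroup.zsmul_mem _ hz _
    have hd : -((c * v) • z) + w ∈ cenSub I (inter L I) hJI :=
      Cen.of_mem hJI ⟨hwz, I.add_mem (I.neg_mem hcz.1) hw.2⟩
    have := AddSubgroup.add_mem _ hcz hd
    rw [add_neg_cancel_left] at this
    exact this

end helpers

/-- Let `B` be a supersoluble brace and `I` an ideal of `B` that is centrally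
nilpotent as a brace (its upper central series reaches `I`). Then `I` is
`B`-centrally nilpotent: there is a finite chain `{0} = J 0 ≤ … ≤ J n = I` of
ideals of `B` whose factors are central in `I`. -/
theorem bCentrallyNilpotent_of_centrallyNilpotent (B : Type*) [SkewBrace B]
    (hB : IsSupersoluble B) (I : BraceIdeal B)
    (hcn : ∃ m : ℕ, zetaChainRel I.carrier m = I.carrier) :
    ∃ (n : ℕ) (J : ℕ → BraceIdeal B),
      (J 0).carrier = {0} ∧ (J n).carrier = I.carrier ∧
      (∀ j, j < n → (J j).carrier ⊆ (J (j + 1)).carrier) ∧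
      ∀ j, j < n → ∀ x ∈ (J (j + 1)).carrier,
        MemZetaQuotRel I.carrier (J j).carrier x := by
  obtain ⟨n, K, h0, hn, hle, hf⟩ := hB
  refine ⟨n, fun i => inter (K i) I, ?_, ?_, fun j hj x hx => ⟨hle j hj hx.1, hx.2⟩, ?_⟩
  · show (K 0).carrier ∩ I.carrier = {0}
    rw [h0]
    exact Set.inter_eq_left.2 (Set.singleton_subset_iff.2 I.zero_mem)
  · show (K n).carrier ∩ I.carrier = I.carrier
    rw [hn, Set.univ_inter]
  · intro j hj x hx
    exact (cen_iff _ _ _).1 (step I (K j) (K (j + 1)) hcn (hf j hj) hx)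

end SkewBrace
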